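/- arXiv:1209.3381 — 2 statements merged into one kernel-verified Lean document; each statement's English description precedes it below -/
import Mathlib

section
/- Assume a_{ij}(ω) ≥ 0 for all i ≠ j and all ω ∈ Ω. Then for every ω ∈ Ω, every u₀ ∈ ℝᴺ, and every t ≥ 0 there holds ‖U_ω(t)u₀‖₁ ≤ exp( ∫₀ᵗ Σ_{i=1}^{N} max_{1≤j≤N} a_{ij}(θ_τ ω) dτ ) ‖u₀‖₁. If moreover ω ↦ max_{i,j} a_{ij}(ω) belongs to L₁(Ω, 𝔉, ℙ), then the functions ω ↦ sup_{0≤s≤1} ln⁺‖U_ω(s)‖ and ω ↦ sup_{0≤s≤1} ln⁺‖U_{θ_s ω}(1−s)‖ belong to L₁(Ω, 𝔉, ℙ). -/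
open MeasureTheory Matrix Filter

/-- `ln⁺ x = max (ln x) 0` (with `Real.log 0 = 0`, so `ln⁺ 0 = 0`). -/
noncomputable def lnplus (x : ℝ) : ℝ := max (Real.log x) 0

/-- The Euclidean norm on `Fin N → ℝ`. -/
noncomputable def enorm' {N : ℕ} (u : Fin N → ℝ) : ℝ := Real.sqrt (∑ i, (u i) ^ 2)

/-- The ℓ¹ norm on `Fin N → ℝ`. -/
noncomputable def l1norm {N : ℕ} (u : Fin N → ℝ) : ℝ := ∑ i, |u i|

/-- The operator norm of a matrix with respect to the Euclidean norm. -/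
noncomputable def eopNorm {N : ℕ} (M : Matrix (Fin N) (Fin N) ℝ) : ℝ :=
  sSup {c : ℝ | ∃ u : Fin N → ℝ, enorm' u ≤ 1 ∧ c = enorm' (M.mulVec u)}

lemma ac_comp_lip {f φ : ℝ → ℝ} {a b : ℝ} {K : NNReal}
    (hf : AbsolutelyContinuousOnInterval f a b)
    (hφ : LipschitzOnWith K φ (f '' Set.uIcc a b)) :
    AbsolutelyContinuousOnInterval (fun x => φ (f x)) a b := by
  have h0 : Tendsto (fun E : ℕ × (ℕ → ℝ × ℝ) ↦
      (K : ℝ) * ∑ i ∈ Finset.range E.1, dist (f (E.2 i).1) (f (E.2 i).2))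
      (AbsolutelyContinuousOnInterval.totalLengthFilter ⊓
        𝓟 (AbsolutelyContinuousOnInterval.disjWithin a b)) (nhds 0) := by
    simpa using Tendsto.const_mul (K : ℝ) hf
  refine squeeze_zero' (Eventually.of_forall fun t => Finset.sum_nonneg fun i _ => dist_nonneg) ?_ h0
  filter_upwards [mem_inf_of_right (mem_principal_self _)] with E hE
  rw [Finset.mul_sum]
  refine Finset.sum_le_sum fun i hi => ?_
  exact hφ.dist_le_mul _ ⟨_, (hE.1 i hi).1, rfl⟩ _ ⟨_, (hE.1 i hi).2, rfl⟩

lemma ac_exp {f : ℝ → ℝ} {a b : ℝ} (hf : AbsolutelyContinuousOnInterval f a b) :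
    AbsolutelyContinuousOnInterval (fun x => Real.exp (f x)) a b := by
  obtain ⟨C, hC⟩ := hf.exists_bound
  obtain ⟨K, hK⟩ := (Real.contDiff_exp (n := 1)).contDiffOn.exists_lipschitzOnWith (by decide)
    (convex_Icc (-C) C) isCompact_Icc
  refine ac_comp_lip hf (hK.mono ?_)
  rintro _ ⟨x, hx, rfl⟩
  exact abs_le.1 (hC x hx)

lemma ac_abs {f : ℝ → ℝ} {a b : ℝ} (hf : AbsolutelyContinuousOnInterval f a b) :
    AbsolutelyContinuousOnInterval (fun x => |f x|) a b := by
  refine ac_comp_lip (K := 1) (φ := fun y => |y|) hf (LipschitzWith.lipschitzOnWith ?_)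
  exact LipschitzWith.of_dist_le_mul fun x y => by
    simpa [Real.dist_eq] using abs_abs_sub_abs_le x y

lemma ac_const (c a b : ℝ) : AbsolutelyContinuousOnInterval (fun _ : ℝ => c) a b :=
  (contDiff_const (n := 1)).contDiffOn.absolutelyContinuousOnInterval

lemma ac_sum {ι : Type*} (s : Finset ι) {f : ι → ℝ → ℝ} {a b : ℝ}
    (hf : ∀ i, AbsolutelyContinuousOnInterval (f i) a b) :
    AbsolutelyContinuousOnInterval (fun x => ∑ i ∈ s, f i x) a b := by
  classical
  induction s using Finset.induction_on with
  | empty => simpa using ac_const 0 a b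
  | insert i s hi ih =>
    simp only [Finset.sum_insert hi]
    exact (hf i).fun_add ih

lemma ac_anti {f : ℝ → ℝ} {a b : ℝ} (hab : a ≤ b) (hf : AbsolutelyContinuousOnInterval f a b)
    (hd : ∀ᵐ x, x ∈ Set.uIcc a b → deriv f x ≤ 0) : f b ≤ f a := by
  have h := hf.integral_deriv_eq_sub
  have : ∫ x in a..b, deriv f x ≤ 0 := by
    rw [intervalIntegral.integral_of_le hab]
    refine integral_nonpos_of_ae ?_
    rw [EventuallyLE, ae_restrict_iff' measurableSet_Ioc]
    filter_upwards [hd] with x hx hx'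
    exact hx (by rw [Set.uIcc_of_le hab]; exact Set.Ioc_subset_Icc_self hx')
  linarith

lemma gron {φ g : ℝ → ℝ} {a b : ℝ} (hab : a ≤ b) (hφ : AbsolutelyContinuousOnInterval φ a b)
    (hg : IntervalIntegrable g volume a b)
    (hd : ∀ᵐ x, x ∈ Set.uIcc a b → deriv φ x ≤ g x * φ x) :
    φ b ≤ Real.exp (∫ x in a..b, g x) * φ a := by
  have hG := hg.absolutelyContinuousOnInterval_intervalIntegral (c := a) (by simp)
  have hE := ac_exp hG.fun_neg
  have hf := hE.fun_mul hφ
  have key := ac_anti hab hf (by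
    filter_upwards [hφ.ae_differentiableAt, hg.ae_hasDerivAt_integral, hd] with x h1 h2 h3 hx
    have := ((h2 hx a (by simp)).fun_neg.exp).fun_mul (h1 hx).hasDerivAt
    rw [this.deriv]
    have h4 := mul_le_mul_of_nonneg_left (h3 hx) (Real.exp_pos (-∫ t in a..x, g t)).le
    nlinarith)
  simp only [intervalIntegral.integral_same, neg_zero, Real.exp_zero, one_mul, Real.exp_neg] at key
  rwa [inv_mul_le_iff₀ (Real.exp_pos _)] at key

lemma gron_back {φ g : ℝ → ℝ} {a b : ℝ} (hab : a ≤ b) (hφ : AbsolutelyContinuousOnInterval φ a b)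
    (hg : IntervalIntegrable g volume a b)
    (hd : ∀ᵐ x, x ∈ Set.uIcc a b → -(g x * φ x) ≤ deriv φ x) :
    φ a ≤ Real.exp (∫ x in a..b, g x) * φ b := by
  have hG := hg.absolutelyContinuousOnInterval_intervalIntegral (c := a) (by simp)
  have hE := ac_exp hG
  have hf := (hE.fun_mul hφ).fun_neg
  have key := ac_anti hab hf (by
    filter_upwards [hφ.ae_differentiableAt, hg.ae_hasDerivAt_integral, hd] with x h1 h2 h3 hx
    have := (((h2 hx a (by simp)).exp).fun_mul (h1 hx).hasDerivAt).fun_neg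
    rw [this.deriv]
    have h4 := mul_le_mul_of_nonneg_left (h3 hx) (Real.exp_pos (∫ t in a..x, g t)).le
    nlinarith)
  simpa using key

lemma int_exp {g : ℝ → ℝ} {t : ℝ} 
    (hg : IntervalIntegrable g volume 0 t) :
    ∫ s in (0:ℝ)..t, g s * Real.exp (2 * ∫ r in (0:ℝ)..s, g r) ≤
      Real.exp (2 * ∫ r in (0:ℝ)..t, g r) / 2 := by
  have hG := hg.absolutelyContinuousOnInterval_intervalIntegral (c := 0) (by simp)
  have hE := ac_exp (hG.const_mul 2)
  have h := hE.integral_deriv_eq_sub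
  have h2 : ∫ x in (0:ℝ)..t, deriv (fun x => Real.exp (2 * ∫ r in (0:ℝ)..x, g r)) x =
      ∫ x in (0:ℝ)..t, 2 * (g x * Real.exp (2 * ∫ r in (0:ℝ)..x, g r)) := by
    apply intervalIntegral.integral_congr_ae
    filter_upwards [hg.ae_hasDerivAt_integral] with x h2 hx
    rw [((h2 (Set.uIoc_subset_uIcc hx) 0 (by simp)).const_mul 2).exp.deriv]
    ring
  rw [intervalIntegral.integral_const_mul] at h2
  simp only [intervalIntegral.integral_same] at h
  rw [h2] at h
  norm_num at h
  linarith

lemma ii_mulVec {N : ℕ} {B : ℝ → Matrix (Fin N) (Fin N) ℝ}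
    (hB : ∀ i j x y, IntervalIntegrable (fun t => B t i j) volume x y)
    {u : ℝ → Fin N → ℝ} (hu : Continuous u) (a b : ℝ) :
    IntervalIntegrable (fun s => B s *ᵥ u s) volume a b := by
  have h : ∀ i, IntervalIntegrable (fun s => (B s *ᵥ u s) i) volume a b := by
    intro i
    simp only [Matrix.mulVec, dotProduct]
    refine (IntervalIntegrable.sum Finset.univ (f := fun j s => B s i j * u s j) fun j _ => ?_).congr ?_
    · exact (hB i j a b).mul_continuousOn ((continuous_apply j).comp hu).continuousOn
    · intro s _; simp
  exact ⟨Integrable.of_eval fun i => (h i).1, Integrable.of_eval fun i => (h i).2⟩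

lemma ii_eval {N : ℕ} {f : ℝ → Fin N → ℝ} {a b : ℝ} (hf : IntervalIntegrable f volume a b)
    (i : Fin N) : (∫ s in a..b, f s) i = ∫ s in a..b, f s i :=
  ((ContinuousLinearMap.proj (R := ℝ) (φ := fun _ : Fin N => ℝ) i).intervalIntegral_comp_comm hf).symm

lemma ii_sumabs {N : ℕ} {B : ℝ → Matrix (Fin N) (Fin N) ℝ}
    (hB : ∀ i j x y, IntervalIntegrable (fun t => B t i j) volume x y) (a b : ℝ) :
    IntervalIntegrable (fun t => ∑ i, ∑ j, |B t i j|) volume a b := by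
  refine (IntervalIntegrable.sum Finset.univ (f := fun i t => ∑ j, |B t i j|) fun i _ => ?_).congr
    (fun s _ => by simp)
  refine (IntervalIntegrable.sum Finset.univ (f := fun j t => |B t i j|) fun j _ => ?_).congr
    (fun s _ => by simp)
  exact (hB i j a b).abs

lemma entry_le_sumabs {N : ℕ} (M : Matrix (Fin N) (Fin N) ℝ) (i j : Fin N) :
    |M i j| ≤ ∑ i, ∑ j, |M i j| := by
  calc |M i j| ≤ ∑ j, |M i j| :=
        Finset.single_le_sum (f := fun j => |M i j|) (fun _ _ => abs_nonneg _) (Finset.mem_univ j)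
    _ ≤ _ := Finset.single_le_sum (f := fun i => ∑ j, |M i j|)
        (fun _ _ => Finset.sum_nonneg fun _ _ => abs_nonneg _) (Finset.mem_univ i)

lemma norm_mulVec_le' {N : ℕ} (M : Matrix (Fin N) (Fin N) ℝ) (v : Fin N → ℝ) :
    ‖M *ᵥ v‖ ≤ (∑ i, ∑ j, |M i j|) * ‖v‖ := by
  have h0 : 0 ≤ ∑ i, ∑ j, |M i j| :=
    Finset.sum_nonneg fun _ _ => Finset.sum_nonneg fun _ _ => abs_nonneg _
  rw [pi_norm_le_iff_of_nonneg (by positivity)]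
  intro i
  calc ‖(M *ᵥ v) i‖ = |∑ j, M i j * v j| := rfl
    _ ≤ ∑ j, |M i j * v j| := Finset.abs_sum_le_sum_abs _ _
    _ ≤ ∑ j, |M i j| * ‖v‖ := by
        refine Finset.sum_le_sum fun j _ => ?_
        rw [abs_mul]
        exact mul_le_mul_of_nonneg_left (norm_le_pi_norm v j) (abs_nonneg _)
    _ = (∑ j, |M i j|) * ‖v‖ := by rw [Finset.sum_mul]
    _ ≤ _ := by
        refine mul_le_mul_of_nonneg_right ?_ (norm_nonneg _)
        exact Finset.single_le_sum (f := fun i => ∑ j, |M i j|)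
          (fun _ _ => Finset.sum_nonneg fun _ _ => abs_nonneg _) (Finset.mem_univ i)

lemma sol_ac {N : ℕ} {B : ℝ → Matrix (Fin N) (Fin N) ℝ}
    (hB : ∀ i j x y, IntervalIntegrable (fun t => B t i j) volume x y)
    {u : ℝ → Fin N → ℝ} (hu : Continuous u) {c : Fin N → ℝ} {s : ℝ}
    (he : ∀ t, u t = c + ∫ r in s..t, B r *ᵥ u r) (i : Fin N) (a b : ℝ) :
    AbsolutelyContinuousOnInterval (fun t => u t i) a b ∧
      ∀ᵐ x, x ∈ Set.uIcc a b → HasDerivAt (fun t => u t i) ((B x *ᵥ u x) i) x := by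
  have hInt := ii_mulVec hB hu
  have hi : ∀ a b, IntervalIntegrable (fun r => (B r *ᵥ u r) i) volume a b := fun a b =>
    ⟨(hInt a b).1.eval i, (hInt a b).2.eval i⟩
  have h1 : (fun t => u t i) = fun t => (c i + ∫ r in s..a, (B r *ᵥ u r) i) +
      ∫ r in a..t, (B r *ᵥ u r) i := by
    funext t
    rw [add_assoc, intervalIntegral.integral_add_adjacent_intervals (hi _ _) (hi _ _),
      ← ii_eval (hInt _ _), ← Pi.add_apply, ← he t]
  rw [h1]
  refine ⟨(ac_const _ _ _).fun_add
    ((hi a b).absolutelyContinuousOnInterval_intervalIntegral (by simp)), ?_⟩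
  filter_upwards [(hi a b).ae_hasDerivAt_integral] with x hx hx'
  exact (hx hx' a (by simp)).const_add _

lemma abs_deriv_le {f : ℝ → ℝ} {x d e : ℝ} (hf : HasDerivAt f d x)
    (ha : DifferentiableAt ℝ (fun y => |f y|) x)
    (h1 : 0 < f x → d ≤ e) (h2 : f x < 0 → -d ≤ e) (h3 : f x = 0 → 0 ≤ e) :
    deriv (fun y => |f y|) x ≤ e := by
  rcases lt_trichotomy (f x) 0 with h | h | h
  · have : (fun y => |f y|) =ᶠ[nhds x] fun y => - f y := by
      filter_upwards [hf.continuousAt.eventually (gt_mem_nhds h)] with y hy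
      exact abs_of_neg hy
    rw [this.deriv_eq, hf.fun_neg.deriv]
    exact h2 h
  · have : IsLocalMin (fun y => |f y|) x := by
      refine Eventually.of_forall fun y => ?_
      simp [h]
    rw [this.deriv_eq_zero]
    exact h3 h
  · have : (fun y => |f y|) =ᶠ[nhds x] fun y => f y := by
      filter_upwards [hf.continuousAt.eventually (lt_mem_nhds h)] with y hy
      exact abs_of_pos hy
    rw [this.deriv_eq, hf.deriv]
    exact h1 h

lemma row_bound {N : ℕ} (M : Matrix (Fin N) (Fin N) ℝ)
    (v : Fin N → ℝ) (i : Fin N) :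
    ∑ j, M i j * |v j| ≤ (⨆ j, M i j) * ∑ j, |v j| := by
  rw [Finset.mul_sum]
  refine Finset.sum_le_sum fun j _ => mul_le_mul_of_nonneg_right ?_ (abs_nonneg _)
  exact le_ciSup (f := fun j => M i j) (Set.finite_range _).bddAbove j

lemma abs_iSup_row_le {N : ℕ} (hN : 2 ≤ N) (M : Matrix (Fin N) (Fin N) ℝ) (i : Fin N) :
    |⨆ j, M i j| ≤ ∑ i, ∑ j, |M i j| := by
  haveI : Nonempty (Fin N) := ⟨i⟩
  obtain ⟨j, hj⟩ := exists_eq_ciSup_of_finite (f := fun j => M i j)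
  rw [← hj]
  exact entry_le_sumabs M i j

lemma ii_rowsup {N : ℕ} (hN : 2 ≤ N) {B : ℝ → Matrix (Fin N) (Fin N) ℝ}
    (hm : ∀ i j, Measurable fun t => B t i j)
    (hB : ∀ i j x y, IntervalIntegrable (fun t => B t i j) volume x y) (a b : ℝ) :
    IntervalIntegrable (fun t => ∑ i, ⨆ j, B t i j) volume a b := by
  refine (IntervalIntegrable.sum Finset.univ (f := fun i t => ⨆ j, B t i j) fun i _ => ?_).congr
    (fun s _ => by simp)
  refine (ii_sumabs hB a b).mono_fun
    (Measurable.iSup fun j => hm i j).aestronglyMeasurable (Eventually.of_forall fun t => ?_)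
  exact (abs_iSup_row_le hN (B t) i).trans (le_abs_self _)

lemma l1_bound {N : ℕ} (hN : 2 ≤ N) {B : ℝ → Matrix (Fin N) (Fin N) ℝ}
    (hm : ∀ i j, Measurable fun t => B t i j)
    (hB : ∀ i j x y, IntervalIntegrable (fun t => B t i j) volume x y)
    (hpos : ∀ t i j, i ≠ j → 0 ≤ B t i j)
    {u : ℝ → Fin N → ℝ} (hu : Continuous u) {c : Fin N → ℝ}
    (he : ∀ t, u t = c + ∫ r in (0:ℝ)..t, B r *ᵥ u r) {t : ℝ} (ht : 0 ≤ t) :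
    l1norm (u t) ≤ Real.exp (∫ τ in (0:ℝ)..t, ∑ i, ⨆ j, B τ i j) * l1norm c := by
  have hac := fun i => sol_ac hB hu he i 0 t
  have h0 : u 0 = c := by rw [he 0]; simp
  rw [← h0]
  refine gron (φ := fun t => l1norm (u t)) ht (ac_sum _ fun i => ac_abs (hac i).1)
    (ii_rowsup hN hm hB 0 t) ?_
  have hd : ∀ᵐ x, ∀ i, x ∈ Set.uIcc 0 t → HasDerivAt (fun t => u t i) ((B x *ᵥ u x) i) x :=
    ae_all_iff.2 fun i => (hac i).2
  have hd' : ∀ᵐ x, ∀ i, x ∈ Set.uIcc 0 t → DifferentiableAt ℝ (fun t => |u t i|) x :=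
    ae_all_iff.2 fun i => (ac_abs (hac i).1).ae_differentiableAt
  filter_upwards [hd, hd'] with x h1 h2 hx
  have h3 : deriv (fun t => l1norm (u t)) x = ∑ i, deriv (fun t => |u t i|) x :=
    (HasDerivAt.fun_sum fun i _ => (h2 i hx).hasDerivAt).deriv
  rw [h3, Finset.sum_mul]
  refine Finset.sum_le_sum fun i _ => (?_ : _ ≤ ∑ j, B x i j * |u x j|).trans (row_bound (B x) (u x) i)
  refine abs_deriv_le (h1 i hx) (h2 i hx) (fun h => ?_) (fun h => ?_) (fun h => ?_)
  · simp only [Matrix.mulVec, dotProduct]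
    refine Finset.sum_le_sum fun j _ => ?_
    by_cases hij : i = j
    · subst hij; rw [abs_of_pos h]
    · exact mul_le_mul_of_nonneg_left (le_abs_self _) (hpos x i j hij)
  · simp only [Matrix.mulVec, dotProduct]
    rw [← Finset.sum_neg_distrib]
    refine Finset.sum_le_sum fun j _ => ?_
    by_cases hij : i = j
    · subst hij; rw [abs_of_neg h]; linarith
    · rw [← mul_neg]
      exact mul_le_mul_of_nonneg_left (neg_le_abs _) (hpos x i j hij)
  · refine Finset.sum_nonneg fun j _ => ?_
    by_cases hij : i = j
    · subst hij; simp [h]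
    · exact mul_nonneg (hpos x i j hij) (abs_nonneg _)

lemma uniq_zero {N : ℕ} {B : ℝ → Matrix (Fin N) (Fin N) ℝ}
    (hB : ∀ i j x y, IntervalIntegrable (fun t => B t i j) volume x y)
    {d : ℝ → Fin N → ℝ} (hu : Continuous d) {s : ℝ}
    (he : ∀ t, d t = 0 + ∫ r in s..t, B r *ᵥ d r) (t : ℝ) : d t = 0 := by
  set g : ℝ → ℝ := fun t => 2 * N * ∑ i, ∑ j, |B t i j| with hg
  have hgi : ∀ a b, IntervalIntegrable g volume a b := fun a b => (ii_sumabs hB a b).const_mul _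
  set φ : ℝ → ℝ := fun t => ∑ i, d t i * d t i with hφ
  have hφac : ∀ a b, AbsolutelyContinuousOnInterval φ a b := fun a b =>
    ac_sum _ fun i => (sol_ac hB hu he i a b).1.fun_mul (sol_ac hB hu he i a b).1
  have hφd : ∀ a b, ∀ᵐ x, x ∈ Set.uIcc a b → |deriv φ x| ≤ g x * φ x := by
    intro a b
    have hd : ∀ᵐ x, ∀ i, x ∈ Set.uIcc a b → HasDerivAt (fun t => d t i) ((B x *ᵥ d x) i) x :=
      ae_all_iff.2 fun i => (sol_ac hB hu he i a b).2
    filter_upwards [hd] with x h1 hx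
    have h3 : deriv φ x = ∑ i, ((B x *ᵥ d x) i * d x i + d x i * (B x *ᵥ d x) i) :=
      (HasDerivAt.fun_sum fun i _ => (h1 i hx).fun_mul (h1 i hx)).deriv
    rw [h3]
    have hn2 : ‖d x‖ * ‖d x‖ ≤ φ x := by
      have hφ0 : 0 ≤ φ x := Finset.sum_nonneg fun i _ => mul_self_nonneg _
      have : ‖d x‖ ≤ Real.sqrt (φ x) := by
        rw [pi_norm_le_iff_of_nonneg (Real.sqrt_nonneg _)]
        intro i
        refine Real.abs_le_sqrt ?_
        rw [pow_two]
        exact Finset.single_le_sum (f := fun i => d x i * d x i)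
          (fun _ _ => mul_self_nonneg _) (Finset.mem_univ i)
      calc _ ≤ Real.sqrt (φ x) * Real.sqrt (φ x) := by gcongr
        _ = _ := Real.mul_self_sqrt hφ0
    have hS0 : 0 ≤ ∑ i, ∑ j, |B x i j| :=
      Finset.sum_nonneg fun _ _ => Finset.sum_nonneg fun _ _ => abs_nonneg _
    calc _ ≤ ∑ i, |((B x *ᵥ d x) i * d x i + d x i * (B x *ᵥ d x) i)| :=
          Finset.abs_sum_le_sum_abs _ _
      _ ≤ ∑ i : Fin N, 2 * ((∑ i, ∑ j, |B x i j|) * ‖d x‖ * ‖d x‖) := by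
          refine Finset.sum_le_sum fun i _ => ?_
          have e1 : |(B x *ᵥ d x) i| ≤ (∑ i, ∑ j, |B x i j|) * ‖d x‖ :=
            (norm_le_pi_norm (B x *ᵥ d x) i).trans (norm_mulVec_le' _ _)
          have e2 : |d x i| ≤ ‖d x‖ := norm_le_pi_norm (d x) i
          rw [mul_comm (d x i), ← two_mul, abs_mul, abs_mul, abs_two]
          gcongr
      _ = g x * (‖d x‖ * ‖d x‖) := by simp [hg]; ring
      _ ≤ _ := by gcongr
  have hs : φ s = 0 := by
    have : d s = 0 := by rw [he s]; simp
    simp [hφ, this]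
  have ht : φ t ≤ 0 := by
    rcases le_total s t with h | h
    · have := gron h (hφac s t) (hgi s t) (by
        filter_upwards [hφd s t] with x hx hx'
        exact (le_abs_self _).trans (hx hx'))
      simpa [hs] using this
    · have := gron_back h (hφac t s) (hgi t s) (by
        filter_upwards [hφd t s] with x hx hx'
        exact neg_le_of_neg_le ((neg_le_abs _).trans (hx hx')))
      simpa [hs] using this
  have hz := (Finset.sum_eq_zero_iff_of_nonneg (fun i _ => mul_self_nonneg (d t i))).1
    (le_antisymm ht (Finset.sum_nonneg fun i _ => mul_self_nonneg _))
  funext i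
  exact mul_self_eq_zero.1 (hz i (Finset.mem_univ i))

lemma picard_tendsto {N : ℕ} {B : ℝ → Matrix (Fin N) (Fin N) ℝ}
    (hB : ∀ i j x y, IntervalIntegrable (fun t => B t i j) volume x y)
    {u : ℝ → Fin N → ℝ} (hu : Continuous u) {c : Fin N → ℝ}
    (he : ∀ t, u t = c + ∫ r in (0:ℝ)..t, B r *ᵥ u r)
    (P : ℕ → ℝ → Fin N → ℝ) (hP0 : ∀ t, P 0 t = c)
    (hP : ∀ n t, 0 ≤ t → P (n + 1) t = c + ∫ r in (0:ℝ)..t, B r *ᵥ P n r)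
    {T : ℝ} (hT : 0 ≤ T) :
    Tendsto (fun n => P n T) atTop (nhds (u T)) := by
  obtain ⟨D, hD⟩ := (isCompact_Icc (a := (0:ℝ)) (b := T)).exists_bound_of_continuousOn
    (f := fun t => c - u t) (continuous_const.sub hu).continuousOn
  have hD0 : 0 ≤ D := (norm_nonneg _).trans (hD 0 ⟨le_rfl, hT⟩)
  set g : ℝ → ℝ := fun t => ∑ i, ∑ j, |B t i j| with hg
  have hgi : ∀ a b, IntervalIntegrable g volume a b := fun a b => ii_sumabs hB a b
  have hg0 : ∀ t, 0 ≤ g t := fun t =>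
    Finset.sum_nonneg fun _ _ => Finset.sum_nonneg fun _ _ => abs_nonneg _
  set G : ℝ → ℝ := fun t => ∫ r in (0:ℝ)..t, g r with hG
  have hGc : Continuous G := intervalIntegral.continuous_primitive hgi 0
  have hG0 : ∀ t, 0 ≤ t → 0 ≤ G t := fun t ht =>
    intervalIntegral.integral_nonneg ht fun r _ => hg0 r
  -- interval integrability of the Picard integrand
  have hQ : ∀ n, ∃ q : ℝ → Fin N → ℝ, Continuous q ∧ ∀ t, 0 ≤ t → P n t = q t := by
    intro n
    induction n with
    | zero => exact ⟨fun _ => c, continuous_const, fun t _ => hP0 t⟩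
    | succ n ih =>
      obtain ⟨q, hq, hqP⟩ := ih
      refine ⟨fun t => c + ∫ r in (0:ℝ)..t, B r *ᵥ q r, continuous_const.add
        (intervalIntegral.continuous_primitive (ii_mulVec hB hq) 0), fun t ht => ?_⟩
      rw [hP n t ht]
      congr 1
      refine intervalIntegral.integral_congr fun r hr => ?_
      rw [Set.uIcc_of_le ht] at hr
      simp only [hqP r hr.1]
  have main : ∀ n, ∀ t ∈ Set.Icc (0:ℝ) T, ‖P n t - u t‖ ≤ D * (1/2)^n * Real.exp (2 * G t) := by
    intro n
    induction n with
    | zero =>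
      intro t ht
      rw [hP0, pow_zero, mul_one]
      refine (hD t ht).trans (le_mul_of_one_le_right hD0 (Real.one_le_exp ?_))
      have := hG0 t ht.1
      positivity
    | succ n ih =>
      intro t ht
      obtain ⟨q, hq, hqP⟩ := hQ n
      have e1 : P (n+1) t - u t = ∫ r in (0:ℝ)..t, B r *ᵥ (q r - u r) := by
        rw [hP n t ht.1, he t, add_sub_add_left_eq_sub]
        have : ∫ r in (0:ℝ)..t, B r *ᵥ P n r = ∫ r in (0:ℝ)..t, B r *ᵥ q r := by
          refine intervalIntegral.integral_congr fun r hr => ?_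
          rw [Set.uIcc_of_le ht.1] at hr
          simp only [hqP r hr.1]
        rw [this, ← intervalIntegral.integral_sub (ii_mulVec hB hq _ _) (ii_mulVec hB hu _ _)]
        simp only [Matrix.mulVec_sub]
      rw [e1]
      have e2 : ‖∫ r in (0:ℝ)..t, B r *ᵥ (q r - u r)‖ ≤
          ∫ r in (0:ℝ)..t, D * (1/2)^n * (g r * Real.exp (2 * G r)) := by
        refine intervalIntegral.norm_integral_le_of_norm_le ht.1 ?_ ?_
        · refine Eventually.of_forall fun r hr => ?_
          have hr' : r ∈ Set.Icc (0:ℝ) T := ⟨hr.1.le, hr.2.trans ht.2⟩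
          have := ih r hr'
          rw [hqP r hr'.1] at this
          calc _ ≤ g r * ‖q r - u r‖ := norm_mulVec_le' _ _
            _ ≤ g r * (D * (1/2)^n * Real.exp (2 * G r)) :=
              mul_le_mul_of_nonneg_left this (hg0 r)
            _ = _ := by ring
        · refine IntervalIntegrable.const_mul ?_ _
          exact (hgi 0 t).mul_continuousOn
            (Real.continuous_exp.comp (continuous_const.mul hGc)).continuousOn
      rw [intervalIntegral.integral_const_mul] at e2
      refine e2.trans ?_
      calc _ ≤ D * (1/2)^n * (Real.exp (2 * G t) / 2) :=
            mul_le_mul_of_nonneg_left (int_exp (hgi 0 t)) (by positivity)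
        _ = _ := by ring
  rw [tendsto_iff_norm_sub_tendsto_zero]
  refine squeeze_zero (fun n => norm_nonneg _) (fun n => main n T ⟨hT, le_rfl⟩) ?_
  have : Tendsto (fun n : ℕ => (1/2:ℝ)^n) atTop (nhds 0) :=
    tendsto_pow_atTop_nhds_zero_of_lt_one (by norm_num) (by norm_num)
  simpa using (this.const_mul D).mul_const (Real.exp (2 * G T))

lemma enorm'_eq {N : ℕ} (u : Fin N → ℝ) : enorm' u = ‖WithLp.toLp 2 u‖ := by
  rw [EuclideanSpace.norm_eq]
  simp [enorm']

lemma eopNorm_eq {N : ℕ} (M : Matrix (Fin N) (Fin N) ℝ) :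
    eopNorm M = ‖Matrix.toEuclideanCLM (n := Fin N) (𝕜 := ℝ) M‖ := by
  rw [← ContinuousLinearMap.sSup_unitClosedBall_eq_norm, eopNorm]
  congr 1
  ext c
  constructor
  · rintro ⟨u, hu, rfl⟩
    refine ⟨WithLp.toLp 2 u, ?_, ?_⟩
    · rw [mem_closedBall_zero_iff, ← enorm'_eq]; exact hu
    · simp only [Matrix.toEuclideanCLM_toLp, enorm'_eq]
  · rintro ⟨x, hx, rfl⟩
    refine ⟨WithLp.ofLp x, ?_, ?_⟩
    · rw [enorm'_eq]; exact mem_closedBall_zero_iff.1 hx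
    · rw [enorm'_eq, ← Matrix.toEuclideanCLM_toLp]

lemma eopNorm_nonneg {N : ℕ} (M : Matrix (Fin N) (Fin N) ℝ) : 0 ≤ eopNorm M := by
  rw [eopNorm_eq]; positivity

lemma abs_le_enorm' {N : ℕ} (u : Fin N → ℝ) (i : Fin N) : |u i| ≤ enorm' u := by
  refine Real.abs_le_sqrt ?_
  exact Finset.single_le_sum (f := fun i => u i ^ 2) (fun _ _ => sq_nonneg _) (Finset.mem_univ i)

lemma entry_le_eopNorm {N : ℕ} (M : Matrix (Fin N) (Fin N) ℝ) (i j : Fin N) :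
    |M i j| ≤ eopNorm M := by
  have h := (Matrix.toEuclideanCLM (n := Fin N) (𝕜 := ℝ) M).le_opNorm
    (EuclideanSpace.single j (1:ℝ))
  rw [← eopNorm_eq] at h
  have h2 := abs_le_enorm' (M *ᵥ Pi.single j 1) i
  rw [enorm'_eq, ← Matrix.toEuclideanCLM_toLp] at h2
  have h3 : (M *ᵥ Pi.single j 1) i = M i j := by simp
  rw [h3] at h2
  refine h2.trans (h.trans ?_)
  simp

lemma continuous_eopNorm {N : ℕ} :
    Continuous (eopNorm : Matrix (Fin N) (Fin N) ℝ → ℝ) := by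
  have : (eopNorm : Matrix (Fin N) (Fin N) ℝ → ℝ) = fun M =>
      ‖Matrix.toEuclideanCLM (n := Fin N) (𝕜 := ℝ) M‖ := funext eopNorm_eq
  rw [this]
  have h : Continuous fun M : Matrix (Fin N) (Fin N) ℝ =>
      (Matrix.toEuclideanCLM (n := Fin N) (𝕜 := ℝ)).toAlgEquiv.toLinearMap M :=
    LinearMap.continuous_of_finiteDimensional _
  exact h.norm

lemma l1_le {N : ℕ} (u : Fin N → ℝ) : l1norm u ≤ N * enorm' u := by
  calc l1norm u ≤ ∑ i : Fin N, enorm' u := Finset.sum_le_sum fun i _ => abs_le_enorm' u i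
    _ = _ := by simp

lemma enorm'_le {N : ℕ} (u : Fin N → ℝ) : enorm' u ≤ l1norm u := by
  refine Real.sqrt_le_iff.2 ⟨Finset.sum_nonneg fun _ _ => abs_nonneg _, ?_⟩
  have := Finset.sum_sq_le_sq_sum_of_nonneg (s := Finset.univ) (f := fun i => |u i|)
    (fun i _ => abs_nonneg _)
  simpa [l1norm] using this

lemma eopNorm_le {N : ℕ} (M : Matrix (Fin N) (Fin N) ℝ) {C : ℝ} (hC : 0 ≤ C)
    (h : ∀ u, l1norm (M *ᵥ u) ≤ C * l1norm u) : eopNorm M ≤ N * C := by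
  refine csSup_le ⟨_, 0, by simp [enorm'], rfl⟩ ?_
  rintro _ ⟨u, hu, rfl⟩
  calc enorm' (M *ᵥ u) ≤ C * l1norm u := (enorm'_le _).trans (h u)
    _ ≤ C * (N * enorm' u) := mul_le_mul_of_nonneg_left (l1_le u) hC
    _ ≤ C * (N * 1) := by gcongr
    _ = _ := by ring

lemma lnplus_continuousOn_comp {X : Type*} [TopologicalSpace X] {f : X → ℝ} (hf : Continuous f) :
    Continuous fun x => lnplus (f x) := by
  have : (fun x => lnplus (f x)) = fun x => Real.posLog (f x) := by
    funext x; rw [lnplus, Real.posLog, max_comm]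
  rw [this]
  exact Real.continuous_posLog.comp hf

lemma lnplus_le {N : ℕ} (hN : 2 ≤ N) {x c : ℝ} (hx : 0 ≤ x) (hc : 0 ≤ c)
    (h : x ≤ N * Real.exp c) : lnplus x ≤ Real.log N + c := by
  have hN' : (1:ℝ) ≤ N := by exact_mod_cast (by omega : 1 ≤ N)
  have hl := Real.log_nonneg hN'
  refine max_le ?_ (by positivity)
  rcases hx.eq_or_lt with rfl | hx
  · simp; positivity
  · have := Real.log_le_log hx h
    rwa [Real.log_mul (by positivity) (Real.exp_pos _).ne', Real.log_exp] at this

lemma measurable_iSup_cont {Ω : Type*} [MeasurableSpace Ω] {f : Set.Icc (0:ℝ) 1 → Ω → ℝ}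
    (hm : ∀ s, Measurable (f s)) (hc : ∀ ω, Continuous fun s => f s ω) :
    Measurable fun ω => ⨆ s, f s ω := by
  obtain ⟨S, hSc, hSd⟩ := TopologicalSpace.exists_countable_dense (Set.Icc (0:ℝ) 1)
  have : (fun ω => ⨆ s, f s ω) = fun ω => ⨆ s : S, f s ω := by
    funext ω
    exact (hSd.ciSup' (hc ω)).symm
  rw [this]
  haveI := hSc.to_subtype
  exact Measurable.iSup fun s => hm s

noncomputable def pic {N : ℕ} {Ω : Type*} (θ : ℝ → Ω → Ω) (A : Ω → Matrix (Fin N) (Fin N) ℝ)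
    (c : Fin N → ℝ) : ℕ → ℝ × Ω → Fin N → ℝ
  | 0, _ => c
  | n + 1, p => c + ∫ r, (Set.Ioc (0:ℝ) p.1).indicator
      (fun r => A (θ r p.2) *ᵥ pic θ A c n (r, p.2)) r

lemma pic_meas {N : ℕ} {Ω : Type*} [MeasurableSpace Ω] {θ : ℝ → Ω → Ω}
    (hθjm : Measurable fun p : ℝ × Ω => θ p.1 p.2)
    {A : Ω → Matrix (Fin N) (Fin N) ℝ}
    (hAmeas : ∀ i j, Measurable fun ω => A ω i j) (c : Fin N → ℝ) (n : ℕ) :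
    Measurable (pic θ A c n) := by
  induction n with
  | zero => exact measurable_const
  | succ n ih =>
    refine measurable_const.add ?_
    have h1 : Measurable fun q : (ℝ × Ω) × ℝ =>
        A (θ q.2 q.1.2) *ᵥ pic θ A c n (q.2, q.1.2) := by
      refine measurable_pi_lambda _ fun i => ?_
      simp only [Matrix.mulVec, dotProduct]
      refine Finset.measurable_sum _ fun j _ => Measurable.mul ?_ ?_
      · exact (hAmeas i j).comp (hθjm.comp (measurable_snd.prodMk (measurable_snd.comp measurable_fst)))
      · exact (measurable_pi_apply j).comp
          (ih.comp (measurable_snd.prodMk (measurable_snd.comp measurable_fst)))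
    have hS : MeasurableSet {q : (ℝ × Ω) × ℝ | 0 < q.2 ∧ q.2 ≤ q.1.1} :=
      (measurableSet_lt measurable_const measurable_snd).inter
        (measurableSet_le measurable_snd (measurable_fst.comp measurable_fst))
    have h2 := (h1.indicator hS).stronglyMeasurable.integral_prod_right' (ν := volume)
    exact h2.measurable

/-- ℓ¹ a priori bound for random cooperative linear ODE systems, and
the resulting integrability conditions (B1)(i). -/
theorem stmt_13 {N : ℕ} (hN : 2 ≤ N)
    {Ω : Type*} [MeasurableSpace Ω] (ℙ : Measure Ω) [IsProbabilityMeasure ℙ]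
    [ℙ.IsComplete]
    (θ : ℝ → Ω → Ω) (hθ0 : θ 0 = id)
    (hθadd : ∀ s t : ℝ, θ (s + t) = θ s ∘ θ t)
    (hθjm : Measurable fun p : ℝ × Ω => θ p.1 p.2)
    (hθmp : ∀ t, MeasurePreserving (θ t) ℙ ℙ)
    (hθerg : ∀ F : Set Ω, MeasurableSet F → (∀ t, θ t ⁻¹' F = F) →
      ℙ F = 0 ∨ ℙ F = 1)
    (A : Ω → Matrix (Fin N) (Fin N) ℝ)
    (hAmeas : ∀ i j, Measurable fun ω => A ω i j)
    (hAloc : ∀ ω, ∀ a c : ℝ,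
      IntervalIntegrable (fun t => eopNorm (A (θ t ω))) volume a c)
    (U : Ω → ℝ → Matrix (Fin N) (Fin N) ℝ)
    (hUcont : ∀ ω (u0 : Fin N → ℝ), Continuous fun t : ℝ => (U ω t).mulVec u0)
    (hUeq : ∀ ω (u0 : Fin N → ℝ) (t : ℝ),
      (U ω t).mulVec u0 = u0 + ∫ s in (0:ℝ)..t, (A (θ s ω)).mulVec ((U ω s).mulVec u0))
    (hO1 : ∀ ω (i j : Fin N), i ≠ j → 0 ≤ A ω i j) :
    (∀ ω (u0 : Fin N → ℝ) (t : ℝ), 0 ≤ t →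
      l1norm ((U ω t).mulVec u0) ≤
        Real.exp (∫ τ in (0:ℝ)..t, ∑ i, ⨆ j, A (θ τ ω) i j) * l1norm u0) ∧
    (Integrable (fun ω => ⨆ i, ⨆ j, A ω i j) ℙ →
      Integrable (fun ω => ⨆ s : Set.Icc (0:ℝ) 1, lnplus (eopNorm (U ω (s : ℝ)))) ℙ ∧
      Integrable (fun ω =>
        ⨆ s : Set.Icc (0:ℝ) 1, lnplus (eopNorm (U (θ (s : ℝ) ω) (1 - (s : ℝ))))) ℙ) := by
  haveI : Nonempty (Fin N) := ⟨⟨0, by omega⟩⟩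
  letI : MeasurableSpace (Matrix (Fin N) (Fin N) ℝ) :=
    inferInstanceAs (MeasurableSpace (Fin N → Fin N → ℝ))
  have hslice : ∀ ω, Measurable fun t : ℝ => θ t ω := fun ω =>
    hθjm.comp (measurable_id.prodMk measurable_const)
  have hm : ∀ ω i j, Measurable fun t => A (θ t ω) i j := fun ω i j => (hAmeas i j).comp (hslice ω)
  have hB : ∀ ω i j x y, IntervalIntegrable (fun t => A (θ t ω) i j) volume x y := by
    intro ω i j x y
    refine (hAloc ω x y).mono_fun (hm ω i j).aestronglyMeasurable (Eventually.of_forall fun t => ?_)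
    exact (entry_le_eopNorm _ i j).trans (le_abs_self _)
  have part1 : ∀ ω (u0 : Fin N → ℝ) (t : ℝ), 0 ≤ t →
      l1norm ((U ω t).mulVec u0) ≤
        Real.exp (∫ τ in (0:ℝ)..t, ∑ i, ⨆ j, A (θ τ ω) i j) * l1norm u0 := by
    intro ω u0 t ht
    exact l1_bound hN (hm ω) (hB ω) (fun t i j hij => hO1 _ i j hij) (hUcont ω u0)
      (hUeq ω u0) ht
  refine ⟨part1, fun hInt => ?_⟩
  have hθθ : ∀ s t ω, θ s (θ t ω) = θ (s + t) ω := fun s t ω => by rw [hθadd]; rfl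
  -- cocycle property
  have hcoc : ∀ ω s t, U (θ s ω) (t - s) * U ω s = U ω t := by
    intro ω s t
    have key : ∀ u0 : Fin N → ℝ, U (θ s ω) (t - s) *ᵥ (U ω s *ᵥ u0) = U ω t *ᵥ u0 := by
      intro u0
      set w : ℝ → Fin N → ℝ := fun t => U (θ s ω) (t - s) *ᵥ (U ω s *ᵥ u0) with hw
      set v : ℝ → Fin N → ℝ := fun t => U ω t *ᵥ u0 with hv
      have hwc : Continuous w :=
        (hUcont (θ s ω) (U ω s *ᵥ u0)).comp (continuous_id.sub continuous_const)
      have hvc : Continuous v := hUcont ω u0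
      have hwe : ∀ t, w t = v s + ∫ r in s..t, A (θ r ω) *ᵥ w r := by
        intro t
        have h1 := hUeq (θ s ω) (U ω s *ᵥ u0) (t - s)
        have h2 := intervalIntegral.integral_comp_sub_right (a := s) (b := t)
          (fun r => A (θ r (θ s ω)) *ᵥ (U (θ s ω) r *ᵥ (U ω s *ᵥ u0))) s
        simp only [hθθ, sub_add_cancel, sub_self] at h2
        simp only [hθθ] at h1
        rw [← h2] at h1
        exact h1
      have hve : ∀ t, v t = v s + ∫ r in s..t, A (θ r ω) *ᵥ v r := by
        intro t
        have h1 : v t = u0 + ∫ r in (0:ℝ)..t, A (θ r ω) *ᵥ v r := hUeq ω u0 t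
        have h2 : v s = u0 + ∫ r in (0:ℝ)..s, A (θ r ω) *ᵥ v r := hUeq ω u0 s
        rw [h1, h2, add_assoc, intervalIntegral.integral_add_adjacent_intervals
          (ii_mulVec (hB ω) hvc _ _) (ii_mulVec (hB ω) hvc _ _)]
      have := uniq_zero (hB ω) (d := fun t => w t - v t) (hwc.sub hvc) (s := s) (by
        intro t
        simp only [Matrix.mulVec_sub]
        rw [intervalIntegral.integral_sub (ii_mulVec (hB ω) hwc _ _) (ii_mulVec (hB ω) hvc _ _)]
        have e1 := hwe t
        have e2 := hve t
        rw [e1, e2, zero_add, add_sub_add_left_eq_sub]) t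
      exact sub_eq_zero.1 this
    refine Matrix.ext_iff_mulVec.2 fun u0 => ?_
    rw [← Matrix.mulVec_mulVec]
    exact key u0
  have hU0 : ∀ ω, U ω 0 = 1 := by
    intro ω
    refine Matrix.ext_iff_mulVec.2 fun u0 => ?_
    rw [hUeq ω u0 0]; simp
  have hUc : ∀ ω, Continuous fun t => U ω t := by
    intro ω
    refine continuous_matrix fun i j => ?_
    have := (continuous_apply i).comp (hUcont ω (Pi.single j 1))
    refine this.congr fun t => ?_
    simp
  have hdet : ∀ ω s, IsUnit (U ω s).det := by
    intro ω s
    have h := hcoc ω s 0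
    rw [hU0] at h
    exact Matrix.isUnit_det_of_left_inverse h
  have hV : ∀ ω s, U (θ s ω) (1 - s) = U ω 1 * (U ω s)⁻¹ := by
    intro ω s
    rw [← hcoc ω s 1, Matrix.mul_assoc, Matrix.mul_nonsing_inv _ (hdet ω s), Matrix.mul_one]
  have hVc : ∀ ω, Continuous fun s => U (θ s ω) (1 - s) := by
    intro ω
    simp only [hV ω]
    refine continuous_const.mul ?_
    simp only [Matrix.inv_def]
    have hdc : Continuous fun s => Ring.inverse (U ω s).det := by
      simp only [Ring.inverse_eq_inv']
      exact (hUc ω).matrix_det.inv₀ fun s => (hdet ω s).ne_zero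
    exact hdc.smul (hUc ω).matrix_adjugate
  have hUm : ∀ t, 0 ≤ t → Measurable fun ω => U ω t := by
    intro t ht
    refine measurable_pi_lambda _ fun i => measurable_pi_lambda _ fun j => ?_
    have h1 : Measurable fun ω => U ω t *ᵥ Pi.single j 1 := by
      refine measurable_of_tendsto_metrizable
        (f := fun n ω => pic θ A (Pi.single j 1) n (t, ω)) (fun n =>
          (pic_meas hθjm hAmeas _ n).comp (measurable_const.prodMk measurable_id)) ?_
      rw [tendsto_pi_nhds]
      intro ω
      refine picard_tendsto (hB ω) (hUcont ω (Pi.single j 1)) (hUeq ω (Pi.single j 1))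
        (fun n t => pic θ A (Pi.single j 1) n (t, ω)) (fun t => rfl) ?_ ht
      intro n t ht
      rw [intervalIntegral.integral_of_le ht, ← integral_indicator measurableSet_Ioc]
      rfl
    have h2 := (measurable_pi_apply i).comp h1
    have h3 : (fun ω => U ω t i j) = (fun b : Fin N → ℝ => b i) ∘
        fun ω => U ω t *ᵥ Pi.single j 1 := by
      funext ω
      simp
    rw [h3]
    exact h2
  -- the dominating function
  set m : Ω → ℝ := fun ω => ⨆ i, ⨆ j, A ω i j with hmdef
  have hmm : Measurable m := Measurable.iSup fun i => Measurable.iSup fun j => hAmeas i j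
  have hrow : ∀ ω i, ⨆ j, A ω i j ≤ m ω := fun ω i =>
    le_ciSup (f := fun i => ⨆ j, A ω i j) (Set.finite_range _).bddAbove i
  have hm0 : ∀ ω, 0 ≤ m ω := by
    intro ω
    have h1 := hO1 ω ⟨0, by omega⟩ ⟨1, by omega⟩ (by simp)
    exact h1.trans ((le_ciSup (f := fun j => A ω ⟨0, by omega⟩ j)
      (Set.finite_range _).bddAbove ⟨1, by omega⟩).trans (hrow ω _))
  have hmi : ∀ ω a b, IntervalIntegrable (fun t => m (θ t ω)) volume a b := by
    intro ω a b
    refine (ii_sumabs (hB ω) a b).mono_fun (hmm.comp (hslice ω)).aestronglyMeasurable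
      (Eventually.of_forall fun t => ?_)
    obtain ⟨i, hi⟩ := exists_eq_ciSup_of_finite (f := fun i => ⨆ j, A (θ t ω) i j)
    have : m (θ t ω) = ⨆ j, A (θ t ω) i j := hi.symm
    simp only [this]
    exact (abs_iSup_row_le hN _ i).trans (le_abs_self _)
  set G : Ω → ℝ := fun ω => Real.log N + N * ∫ τ in (0:ℝ)..1, m (θ τ ω) with hGdef
  have hGi : Integrable G ℙ := by
    refine (integrable_const _).add (Integrable.const_mul ?_ _)
    have hp : Integrable (fun p : ℝ × Ω => m (θ p.1 p.2))
        ((volume.restrict (Set.Ioc (0:ℝ) 1)).prod ℙ) := by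
      have hpm : AEStronglyMeasurable (fun p : ℝ × Ω => m (θ p.1 p.2))
        ((volume.restrict (Set.Ioc (0:ℝ) 1)).prod ℙ) := (hmm.comp hθjm).aestronglyMeasurable
      rw [integrable_prod_iff hpm]
      refine ⟨Eventually.of_forall fun t => (hθmp t).integrable_comp_of_integrable hInt, ?_⟩
      have : (fun x : ℝ => ∫ y, ‖m (θ (x, y).1 (x, y).2)‖ ∂ℙ) = fun _ => ∫ y, ‖m y‖ ∂ℙ := by
        funext t
        have := integral_map (μ := ℙ) (φ := θ t) (hθmp t).measurable.aemeasurable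
          (f := fun y => ‖m y‖) (hmm.norm).aestronglyMeasurable
        rw [(hθmp t).map_eq] at this
        exact this.symm
      rw [this]
      exact integrable_const _
    have := hp.integral_prod_right
    refine this.congr (Eventually.of_forall fun ω => ?_)
    simp only
    rw [intervalIntegral.integral_of_le zero_le_one]
  -- pointwise bound
  have hbd : ∀ ω s t, 0 ≤ s → s ≤ t → t ≤ 1 → lnplus (eopNorm (U (θ s ω) (t - s))) ≤ G ω := by
    intro ω s t hs hst ht
    have hI0 : 0 ≤ (N:ℝ) * ∫ τ in (0:ℝ)..1, m (θ τ ω) :=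
      mul_nonneg (by positivity)
        (intervalIntegral.integral_nonneg zero_le_one fun τ _ => hm0 _)
    refine lnplus_le hN (eopNorm_nonneg _) hI0 ?_
    refine eopNorm_le _ (Real.exp_pos _).le fun u => ?_
    refine (part1 (θ s ω) u (t - s) (by linarith)).trans ?_
    refine mul_le_mul_of_nonneg_right (Real.exp_le_exp.2 ?_)
      (Finset.sum_nonneg fun _ _ => abs_nonneg _)
    have h2 := intervalIntegral.integral_comp_sub_right (a := s) (b := t)
          (fun r => ∑ i, ⨆ j, A (θ r (θ s ω)) i j) s
    simp only [hθθ, sub_add_cancel, sub_self] at h2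
    simp only [hθθ]
    rw [← h2, ← intervalIntegral.integral_const_mul]
    calc ∫ x in s..t, ∑ i, ⨆ j, A (θ x ω) i j ≤ ∫ x in s..t, N * m (θ x ω) := by
          refine intervalIntegral.integral_mono_on hst (ii_rowsup hN (hm ω) (hB ω) s t)
            ((hmi ω s t).const_mul _) fun x _ => ?_
          calc _ ≤ ∑ i : Fin N, m (θ x ω) := Finset.sum_le_sum fun i _ => hrow _ i
            _ = _ := by simp
      _ ≤ _ := by
          refine intervalIntegral.integral_mono_interval hs hst ht
            (Eventually.of_forall fun x => ?_) ((hmi ω 0 1).const_mul _)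
          exact mul_nonneg (by positivity) (hm0 _)
  have fin : ∀ f : Set.Icc (0:ℝ) 1 → Ω → ℝ, (∀ s, Measurable (f s)) →
      (∀ ω, Continuous fun s => f s ω) → (∀ s ω, 0 ≤ f s ω) → (∀ s ω, f s ω ≤ G ω) →
      Integrable (fun ω => ⨆ s, f s ω) ℙ := by
    intro f h1 h2 h3 h4
    refine hGi.mono' (measurable_iSup_cont h1 h2).aestronglyMeasurable
      (Eventually.of_forall fun ω => ?_)
    rw [Real.norm_of_nonneg (Real.iSup_nonneg fun s => h3 s ω)]
    exact ciSup_le fun s => h4 s ω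
  have hln : Measurable lnplus := (lnplus_continuousOn_comp continuous_id).measurable
  have hel : Continuous fun M : Matrix (Fin N) (Fin N) ℝ => lnplus (eopNorm M) :=
    lnplus_continuousOn_comp continuous_eopNorm
  have helm : Measurable fun M : Matrix (Fin N) (Fin N) ℝ => lnplus (eopNorm M) := by
    haveI : BorelSpace (Matrix (Fin N) (Fin N) ℝ) :=
      inferInstanceAs (BorelSpace (Fin N → Fin N → ℝ))
    exact hel.measurable
  constructor
  · refine fin (fun s ω => lnplus (eopNorm (U ω (s : ℝ)))) (fun s => ?_) (fun ω => ?_)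
      (fun s ω => le_max_right _ _) (fun s ω => ?_)
    · exact helm.comp (hUm s s.2.1)
    · exact hel.comp ((hUc ω).comp continuous_subtype_val)
    · have := hbd ω 0 s le_rfl s.2.1 s.2.2
      simpa [hθ0] using this
  · refine fin (fun s ω => lnplus (eopNorm (U (θ (s : ℝ) ω) (1 - (s : ℝ))))) (fun s => ?_)
      (fun ω => ?_) (fun s ω => le_max_right _ _) (fun s ω => ?_)
    · exact helm.comp ((hUm (1 - s) (by linarith [s.2.2])).comp (hθmp s).measurable)
    · exact hel.comp ((hVc ω).comp continuous_subtype_val)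
    · exact hbd ω s 1 s.2.1 s.2.2 le_rfl
end

section
/- Assume a_{ij}(ω) ≥ 0 for all i ≠ j and all ω ∈ Ω. Then for every ω ∈ Ω there exists a nontrivial entire positive solution of the random linear system u' = A(θ_t ω)u, i.e. a continuous function v : ℝ → X⁺ ∖ {0} such that v(t) = v(s) + ∫_s^t A(θ_τ ω) v(τ) dτ for all s ≤ t in ℝ. -/
open MeasureTheory Matrix Filter

namespace Stmt15

lemma ftc_ac {f f' : ℝ → ℝ} {a b : ℝ} (hf : AbsolutelyContinuousOnInterval f a b)
    (hd : ∀ᵐ x, x ∈ Set.uIcc a b → HasDerivAt f (f' x) x) :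
    ∫ x in a..b, f' x = f b - f a := by
  rw [← hf.integral_deriv_eq_sub]
  apply intervalIntegral.integral_congr_ae
  filter_upwards [hd] with x hx hx2
  exact (hx (Set.uIoc_subset_uIcc hx2)).deriv.symm

lemma ac_lip {f g : ℝ → ℝ} {a b : ℝ} {K : ℝ} (hf : AbsolutelyContinuousOnInterval f a b)
    (h : ∀ x ∈ Set.uIcc a b, ∀ y ∈ Set.uIcc a b, dist (g x) (g y) ≤ K * dist (f x) (f y)) :
    AbsolutelyContinuousOnInterval g a b := by
  apply squeeze_zero' ?_ ?_ (by simpa using Tendsto.const_mul K hf)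
  · exact Eventually.of_forall fun t => Finset.sum_nonneg (fun i hi ↦ by positivity)
  · rw [eventually_inf_principal]
    filter_upwards with E hE
    rw [Finset.mul_sum]
    refine Finset.sum_le_sum fun i hi => ?_
    have := hE.1 i hi
    exact h _ this.1 _ this.2

lemma ac_exp {f : ℝ → ℝ} {a b : ℝ} (hf : AbsolutelyContinuousOnInterval f a b) :
    AbsolutelyContinuousOnInterval (fun x => Real.exp (f x)) a b := by
  obtain ⟨C, hC⟩ := hf.exists_bound
  apply ac_lip (K := Real.exp C) hf
  have key : ∀ p q : ℝ, p ≤ C → p - q ≥ 0 → Real.exp p - Real.exp q ≤ Real.exp C * (p - q) := by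
    intro p q hp hpq
    have h1 : Real.exp q = Real.exp p * Real.exp (q - p) := by rw [← Real.exp_add]; ring_nf
    have h2 := Real.add_one_le_exp (q - p)
    have h3 := Real.exp_le_exp.2 hp
    have h4 := Real.exp_pos p
    rw [h1]
    nlinarith
  intro x hx y hy
  have hx' := (abs_le.1 (hC x hx)).2
  have hy' := (abs_le.1 (hC y hy)).2
  rw [Real.dist_eq, Real.dist_eq]
  rcases le_total (f x) (f y) with h | h
  · rw [abs_sub_comm, abs_sub_comm (f x), abs_of_nonneg (sub_nonneg.2 (Real.exp_le_exp.2 h)),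
      abs_of_nonneg (sub_nonneg.2 h)]
    exact key _ _ hy' (by linarith)
  · rw [abs_of_nonneg (sub_nonneg.2 (Real.exp_le_exp.2 h)), abs_of_nonneg (sub_nonneg.2 h)]
    exact key _ _ hx' (by linarith)

lemma ac_prim {m : ℝ → ℝ} (hm : ∀ a b, IntervalIntegrable m volume a b) (s a b : ℝ) :
    AbsolutelyContinuousOnInterval (fun x => ∫ y in s..x, m y) a b := by
  apply ((hm (min s (min a b)) (max s (max a b))).absolutelyContinuousOnInterval_intervalIntegral
    (c := s) ?_).mono
  · rw [Set.uIcc, Set.uIcc]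
    apply Set.Icc_subset_Icc <;> simp
  · rw [Set.uIcc_of_le (by simp)]
    constructor <;> simp

lemma deriv_prim {m : ℝ → ℝ} (hm : ∀ a b, IntervalIntegrable m volume a b) (s a b : ℝ) :
    ∀ᵐ x, x ∈ Set.uIcc a b → HasDerivAt (fun x => ∫ y in s..x, m y) (m x) x := by
  filter_upwards [(hm (min s (min a b)) (max s (max a b))).ae_hasDerivAt_integral] with x hx hx2
  apply hx
  · rw [Set.uIcc] at *
    exact Set.Icc_subset_Icc (by simp) (by simp) hx2
  · rw [Set.uIcc_of_le (by simp)]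
    constructor <;> simp

lemma exp_prim {m : ℝ → ℝ} (hm : ∀ a b, IntervalIntegrable m volume a b) (c s a b : ℝ) :
    ∫ x in a..b, m x * c * Real.exp (c * ∫ y in s..x, m y)
      = Real.exp (c * ∫ y in s..b, m y) - Real.exp (c * ∫ y in s..a, m y) := by
  apply ftc_ac (f := fun x => Real.exp (c * ∫ y in s..x, m y))
  · exact ac_exp ((ac_prim hm s a b).const_mul c)
  · filter_upwards [deriv_prim hm s a b] with x hx hx2
    convert! ((hx hx2).const_mul c).exp using 1
    ring

/-- Weight. -/
noncomputable def W (m : ℝ → ℝ) (s t : ℝ) : ℝ := Real.exp (2 * |∫ y in s..t, m y|)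

lemma W_cont {m : ℝ → ℝ} (hm : ∀ a b, IntervalIntegrable m volume a b) (s : ℝ) :
    Continuous (W m s) := by
  unfold W
  have := intervalIntegral.continuous_primitive hm s
  fun_prop

lemma W_pos (m : ℝ → ℝ) (s t : ℝ) : 0 < W m s t := Real.exp_pos _

lemma one_le_W (m : ℝ → ℝ) (s t : ℝ) : 1 ≤ W m s t := Real.one_le_exp (by positivity)

lemma W_int {m : ℝ → ℝ} (hm : ∀ a b, IntervalIntegrable m volume a b) (h0 : ∀ x, 0 ≤ m x)
    (s t : ℝ) : |∫ x in s..t, m x * W m s x| = (W m s t - 1) / 2 := by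
  have hW := one_le_W m s t
  rcases le_total s t with h | h
  · have e := exp_prim hm 2 s s t
    have e2 : ∫ x in s..t, m x * 2 * Real.exp (2 * ∫ y in s..x, m y) =
        ∫ x in s..t, 2 * (m x * W m s x) := by
      apply intervalIntegral.integral_congr
      intro x hx
      rw [Set.uIcc_of_le h] at hx
      simp only [W]
      rw [abs_of_nonneg (intervalIntegral.integral_nonneg hx.1 fun u _ => h0 u)]
      ring
    rw [e2, intervalIntegral.integral_const_mul] at e
    have e3 : Real.exp (2 * ∫ y in s..t, m y) = W m s t := by
      rw [W, abs_of_nonneg (intervalIntegral.integral_nonneg h fun u _ => h0 u)]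
    rw [e3] at e
    simp at e
    rw [abs_of_nonneg] <;> linarith
  · have e := exp_prim hm (-2) s s t
    have hneg : ∀ x ≤ s, |∫ y in s..x, m y| = - ∫ y in s..x, m y := by
      intro x hx
      apply abs_of_nonpos
      rw [intervalIntegral.integral_symm]
      have := intervalIntegral.integral_nonneg (μ := volume) hx fun u _ => h0 u
      linarith
    have e2 : ∫ x in s..t, m x * (-2) * Real.exp ((-2) * ∫ y in s..x, m y) =
        ∫ x in s..t, (-2) * (m x * W m s x) := by
      apply intervalIntegral.integral_congr
      intro x hx
      rw [Set.uIcc_of_ge h] at hx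
      simp only [W]
      rw [hneg x hx.2]
      ring_nf
    rw [e2, intervalIntegral.integral_const_mul] at e
    have e3 : Real.exp ((-2) * ∫ y in s..t, m y) = W m s t := by
      rw [W, hneg t h]
      ring_nf
    rw [e3] at e
    simp at e
    rw [abs_of_nonpos] <;> linarith

/-- Sum of absolute values of entries. -/
noncomputable def ms {N : ℕ} (C : ℝ → Matrix (Fin N) (Fin N) ℝ) (t : ℝ) : ℝ :=
  ∑ i, ∑ j, |C t i j|

lemma ms_nonneg {N : ℕ} (C : ℝ → Matrix (Fin N) (Fin N) ℝ) (t : ℝ) : 0 ≤ ms C t := by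
  unfold ms; positivity

lemma ms_int {N : ℕ} {C : ℝ → Matrix (Fin N) (Fin N) ℝ}
    (hC : ∀ i j a b, IntervalIntegrable (fun t => C t i j) volume a b) (a b : ℝ) :
    IntervalIntegrable (ms C) volume a b := by
  have : ms C = ∑ i, ∑ j, fun t => |C t i j| := by
    ext t; simp [ms]
  rw [this]
  refine IntervalIntegrable.sum _ fun i _ => IntervalIntegrable.sum _ fun j _ => ?_
  exact (hC i j a b).abs

lemma mulVec_le {N : ℕ} (C : ℝ → Matrix (Fin N) (Fin N) ℝ) (t : ℝ) (v : Fin N → ℝ) :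
    ‖C t *ᵥ v‖ ≤ ms C t * ‖v‖ := by
  rw [pi_norm_le_iff_of_nonneg (mul_nonneg (ms_nonneg C t) (norm_nonneg _))]
  intro i
  simp only [mulVec, dotProduct]
  calc ‖∑ j, C t i j * v j‖ ≤ ∑ j, |C t i j| * ‖v‖ := by
        refine (norm_sum_le _ _).trans (Finset.sum_le_sum fun j _ => ?_)
        rw [norm_mul]
        exact mul_le_mul_of_nonneg_left (norm_le_pi_norm v j) (norm_nonneg _)
    _ = (∑ j, |C t i j|) * ‖v‖ := by rw [Finset.sum_mul]
    _ ≤ _ := by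
        apply mul_le_mul_of_nonneg_right _ (norm_nonneg _)
        exact Finset.single_le_sum (f := fun i => ∑ j, |C t i j|)
          (fun i _ => by positivity) (Finset.mem_univ i)

lemma pi_int {N : ℕ} {f : ℝ → Fin N → ℝ} {a b : ℝ}
    (h : ∀ i, IntervalIntegrable (fun t => f t i) volume a b) :
    IntervalIntegrable f volume a b := by
  rw [intervalIntegrable_iff]
  exact Integrable.of_eval fun i => (intervalIntegrable_iff.1 (h i))

lemma pi_eval {N : ℕ} {f : ℝ → Fin N → ℝ} {a b : ℝ}
    (h : IntervalIntegrable f volume a b) (i : Fin N) :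
    (∫ t in a..b, f t) i = ∫ t in a..b, f t i := by
  simp only [intervalIntegral]
  rw [Pi.sub_apply, MeasureTheory.eval_integral, MeasureTheory.eval_integral]
  · intro j; exact h.2.eval j
  · intro j; exact h.1.eval j

lemma mv_int {N : ℕ} {C : ℝ → Matrix (Fin N) (Fin N) ℝ}
    (hC : ∀ i j a b, IntervalIntegrable (fun t => C t i j) volume a b) {v : ℝ → Fin N → ℝ}
    (hv : Continuous v) (a b : ℝ) : IntervalIntegrable (fun t => C t *ᵥ v t) volume a b := by
  apply pi_int
  intro i
  have : (fun t => (C t *ᵥ v t) i) = ∑ j, fun t => C t i j * v t j := by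
    ext t; simp [mulVec, dotProduct]
  rw [this]
  refine IntervalIntegrable.sum _ fun j _ => ?_
  exact (hC i j a b).mul_continuousOn (by fun_prop)

lemma est {N : ℕ} {C : ℝ → Matrix (Fin N) (Fin N) ℝ}
    (hC : ∀ i j a b, IntervalIntegrable (fun t => C t i j) volume a b) {v : ℝ → Fin N → ℝ}
    (s t K : ℝ) (hK : 0 ≤ K)
    (h : ∀ x ∈ Set.uIcc s t, ‖v x‖ ≤ K * W (ms C) s x) :
    ‖∫ x in s..t, C x *ᵥ v x‖ ≤ K * ((W (ms C) s t - 1) / 2) := by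
  have h1 : ‖∫ x in s..t, C x *ᵥ v x‖ ≤ |∫ x in s..t, K * (ms C x * W (ms C) s x)| := by
    apply intervalIntegral.norm_integral_le_abs_of_norm_le
    · refine (ae_restrict_iff' measurableSet_uIoc).2 (Eventually.of_forall fun x hx => ?_)
      refine (mulVec_le C x _).trans ?_
      have := mul_le_mul_of_nonneg_left (h x (Set.uIoc_subset_uIcc hx)) (ms_nonneg C x)
      linarith
    · exact ((ms_int hC s t).mul_continuousOn (W_cont (ms_int hC) s).continuousOn).const_mul K
  rw [intervalIntegral.integral_const_mul, abs_mul, W_int (ms_int hC) (ms_nonneg C),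
    abs_of_nonneg hK] at h1
  exact h1

/-- Gronwall-type bound. -/
lemma gron {N : ℕ} {C : ℝ → Matrix (Fin N) (Fin N) ℝ}
    (hC : ∀ i j a b, IntervalIntegrable (fun t => C t i j) volume a b) {v : ℝ → Fin N → ℝ}
    (hv : Continuous v) (s : ℝ) (hs : ∀ t, v t = v s + ∫ x in s..t, C x *ᵥ v x) (t : ℝ) :
    ‖v t‖ ≤ 2 * ‖v s‖ * W (ms C) s t := by
  have hW := W_cont (ms_int hC) s
  have hWp := W_pos (ms C) s
  obtain ⟨z, hz, hmax⟩ := (isCompact_uIcc (a := s) (b := t)).exists_isMaxOn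
    ⟨s, Set.left_mem_uIcc⟩ (f := fun x => ‖v x‖ / W (ms C) s x)
    (by apply Continuous.continuousOn; exact hv.norm.div hW fun x => (hWp x).ne')
  set K := ‖v z‖ / W (ms C) s z with hKdef
  have hK : 0 ≤ K := div_nonneg (norm_nonneg _) (hWp z).le
  have hle : ∀ x ∈ Set.uIcc s t, ‖v x‖ ≤ K * W (ms C) s x := by
    intro x hx
    rw [← div_le_iff₀ (hWp x)]
    exact hmax hx
  have h1 := est hC s z K hK (v := v)
    (fun x hx => hle x (Set.uIcc_subset_uIcc_left hz hx))
  have h2 : ‖v z‖ ≤ ‖v s‖ + K * ((W (ms C) s z - 1) / 2) := by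
    conv_lhs => rw [hs z]
    exact (norm_add_le _ _).trans (by gcongr)
  have h3 : ‖v z‖ = K * W (ms C) s z := by rw [hKdef]; field_simp [(hWp z).ne']
  have h4 := one_le_W (ms C) s z
  have h5 : K ≤ 2 * ‖v s‖ := by
    have := norm_nonneg (v s)
    nlinarith
  exact (hle t Set.right_mem_uIcc).trans (by gcongr; exact (hWp t).le)

open scoped BoundedContinuousFunction in
lemma exist {N : ℕ} {C : ℝ → Matrix (Fin N) (Fin N) ℝ}
    (hC : ∀ i j a b, IntervalIntegrable (fun t => C t i j) volume a b)
    (hC0 : ∀ t i j, 0 ≤ C t i j) (s : ℝ) (x : Fin N → ℝ) :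
    ∃ v : ℝ → Fin N → ℝ, Continuous v ∧ (∀ t, v t = x + ∫ y in s..t, C y *ᵥ v y) ∧
      ((∀ i, 0 ≤ x i) → ∀ t, s ≤ t → ∀ i, 0 ≤ v t i) := by
  have hW := W_cont (ms_int hC) s
  have hWp := W_pos (ms C) s
  have hWv : ∀ w : ℝ →ᵇ (Fin N → ℝ), Continuous fun t => W (ms C) s t • w t :=
    fun w => hW.smul w.continuous
  have hest : ∀ w : ℝ →ᵇ (Fin N → ℝ), ∀ t,
      ‖(W (ms C) s t)⁻¹ • ∫ y in s..t, C y *ᵥ (W (ms C) s y • w y)‖ ≤ ‖w‖ / 2 := by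
    intro w t
    have := est hC (v := fun t => W (ms C) s t • w t) s t ‖w‖ (norm_nonneg _) (by
      intro y _
      rw [norm_smul, Real.norm_eq_abs, abs_of_pos (hWp y), mul_comm]
      exact mul_le_mul_of_nonneg_right (w.norm_coe_le_norm y) (hWp y).le)
    rw [norm_smul, norm_inv, Real.norm_eq_abs, abs_of_pos (hWp t), inv_mul_le_iff₀ (hWp t)]
    have h0 := norm_nonneg w
    nlinarith
  let S : (ℝ →ᵇ (Fin N → ℝ)) → (ℝ →ᵇ (Fin N → ℝ)) := fun w =>
    BoundedContinuousFunction.ofNormedAddCommGroup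
      (fun t => (W (ms C) s t)⁻¹ • (x + ∫ y in s..t, C y *ᵥ (W (ms C) s y • w y)))
      (by
        apply (hW.inv₀ fun t => (hWp t).ne').smul
        apply continuous_const.add
        exact intervalIntegral.continuous_primitive (mv_int hC (hWv w)) s)
      (‖x‖ + ‖w‖ / 2) (by
        intro t
        rw [smul_add]
        refine (norm_add_le _ _).trans (add_le_add ?_ (hest w t))
        rw [norm_smul, norm_inv, Real.norm_eq_abs, abs_of_pos (hWp t), inv_mul_le_iff₀ (hWp t)]
        exact le_mul_of_one_le_left (norm_nonneg _) (one_le_W _ _ _))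
  have hSa : ∀ w t, S w t = (W (ms C) s t)⁻¹ • (x + ∫ y in s..t, C y *ᵥ (W (ms C) s y • w y)) :=
    fun w t => rfl
  have hS : ContractingWith (1 / 2 : NNReal) S := by
    refine ⟨by
      rw [← NNReal.coe_lt_coe]; norm_num, LipschitzWith.of_dist_le_mul fun w w' => ?_⟩
    rw [dist_eq_norm, dist_eq_norm]
    rw [BoundedContinuousFunction.norm_le (by positivity)]
    intro t
    have : (S w - S w') t = (W (ms C) s t)⁻¹ • ∫ y in s..t, C y *ᵥ (W (ms C) s y • (w - w') y) := by
      rw [BoundedContinuousFunction.sub_apply, hSa, hSa, ← smul_sub, add_sub_add_left_eq_sub,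
        ← intervalIntegral.integral_sub (mv_int hC (hWv w) s t) (mv_int hC (hWv w') s t)]
      congr 2
      ext1 y
      rw [← mulVec_sub, ← smul_sub]
      rfl
    rw [this]
    refine (hest _ t).trans (le_of_eq ?_)
    push_cast
    ring
  set w := ContractingWith.fixedPoint S hS with hw
  have hfix : S w = w := hS.fixedPoint_isFixedPt
  refine ⟨fun t => W (ms C) s t • w t, hWv w, ?_, ?_⟩
  · intro t
    beta_reduce
    conv_lhs => rw [← hfix, hSa, smul_smul, mul_inv_cancel₀ (hWp t).ne', one_smul]
  · intro hx
    have hit : ∀ n : ℕ, ∀ t, s ≤ t → ∀ i, 0 ≤ (S^[n] 0) t i := by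
      intro n
      induction n with
      | zero => intro t _ i; simp
      | succ n ih =>
        intro t ht i
        rw [Function.iterate_succ_apply', hSa, Pi.smul_apply, Pi.add_apply,
          pi_eval (mv_int hC (hWv _) s t)]
        refine mul_nonneg (inv_nonneg.2 (hWp t).le) (add_nonneg (hx i) ?_)
        apply intervalIntegral.integral_nonneg ht
        intro y hy
        simp only [mulVec, dotProduct]
        exact Finset.sum_nonneg fun j _ => mul_nonneg (hC0 _ _ _)
          (mul_nonneg (hWp y).le (ih y hy.1 j))
    intro t ht i
    refine mul_nonneg (hWp t).le ?_
    have hl := hS.tendsto_iterate_fixedPoint 0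
    have hl2 : Tendsto (fun n => (S^[n] 0) t i) atTop (nhds (w t i)) := by
      have hc : Continuous fun f : ℝ →ᵇ (Fin N → ℝ) => f t i :=
        (continuous_apply i).comp (BoundedContinuousFunction.lipschitz_eval_const t).continuous
      exact (hc.tendsto _).comp hl
    exact ge_of_tendsto' hl2 fun n => hit n t ht i

lemma entire {N : ℕ} (hN : 2 ≤ N) {C : ℝ → Matrix (Fin N) (Fin N) ℝ}
    (hC : ∀ i j a b, IntervalIntegrable (fun t => C t i j) volume a b)
    (hC0 : ∀ t i j, 0 ≤ C t i j) :
    ∃ v : ℝ → Fin N → ℝ, Continuous v ∧ (∀ t i, 0 ≤ v t i) ∧ (∀ t, v t ≠ 0) ∧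
      ∀ s t, v t = v s + ∫ y in s..t, C y *ᵥ v y := by
  have change : ∀ (v : ℝ → Fin N → ℝ), Continuous v → ∀ r x,
      (∀ t, v t = x + ∫ y in r..t, C y *ᵥ v y) →
      ∀ s t, v t = v s + ∫ y in s..t, C y *ᵥ v y := by
    intro v hv r x h s t
    rw [h t, h s, add_assoc, intervalIntegral.integral_add_adjacent_intervals
      (mv_int hC hv _ _) (mv_int hC hv _ _)]
  -- normalized positive solutions from time `-n`
  have hseq : ∀ n : ℕ, ∃ u : ℝ → Fin N → ℝ, Continuous u ∧ ‖u 0‖ = 1 ∧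
      (∀ s t, u t = u s + ∫ y in s..t, C y *ᵥ u y) ∧ ∀ t, -(n : ℝ) ≤ t → ∀ i, 0 ≤ u t i := by
    intro n
    obtain ⟨u, hu, hs, hp⟩ := exist hC hC0 (-(n : ℝ)) (fun _ => 1)
    have hp := hp (fun _ => zero_le_one)
    have h0 : u 0 ≠ 0 := by
      intro h
      have h1 := congrFun (hs 0) ⟨0, by omega⟩
      rw [h, Pi.add_apply, pi_eval (mv_int hC hu _ _)] at h1
      have h2 : 0 ≤ ∫ y in (-(n : ℝ))..0, (C y *ᵥ u y) ⟨0, by omega⟩ := by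
        apply intervalIntegral.integral_nonneg (by simp)
        intro y hy
        simp only [mulVec, dotProduct]
        exact Finset.sum_nonneg fun j _ => mul_nonneg (hC0 _ _ _) (hp y hy.1 j)
      simp only [Pi.zero_apply] at h1
      linarith
    have h0' := norm_pos_iff.2 h0
    refine ⟨fun t => ‖u 0‖⁻¹ • u t, by fun_prop, ?_, ?_, ?_⟩
    · rw [norm_smul, norm_inv, norm_norm, inv_mul_cancel₀ h0'.ne']
    · intro s t
      simp only [mulVec_smul]
      rw [intervalIntegral.integral_smul, ← smul_add, ← change u hu _ _ hs s t]
    · intro t ht i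
      exact mul_nonneg (inv_nonneg.2 h0'.le) (hp t ht i)
  choose u hu hu0 hus hup using hseq
  obtain ⟨x, hx, φ, hφ, hlim⟩ := (isCompact_sphere (0 : Fin N → ℝ) 1).tendsto_subseq
    (x := fun n => u n 0) (fun n => by simp [hu0])
  obtain ⟨v, hv, hvs, -⟩ := exist hC hC0 0 x
  have hv0 : v 0 = x := by simpa using hvs 0
  have hvc := change v hv _ _ hvs
  refine ⟨v, hv, ?_, ?_, hvc⟩
  · intro t i
    have hl : Tendsto (fun k => u (φ k) t) atTop (nhds (v t)) := by
      rw [tendsto_iff_norm_sub_tendsto_zero]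
      have hb : ∀ k, ‖u (φ k) t - v t‖ ≤ 2 * ‖u (φ k) 0 - v 0‖ * W (ms C) 0 t := by
        intro k
        refine gron hC (v := fun t => u (φ k) t - v t) ((hu _).sub hv) 0 ?_ t
        intro t
        simp only [mulVec_sub]
        rw [intervalIntegral.integral_sub (mv_int hC (hu _) _ _) (mv_int hC hv _ _),
          hus (φ k) 0 t, hvc 0 t]
        abel
      refine squeeze_zero (fun _ => norm_nonneg _) hb ?_
      have h1 := tendsto_iff_norm_sub_tendsto_zero.1 hlim
      have h2 := (h1.const_mul 2).mul_const (W (ms C) 0 t)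
      rw [hv0]
      simpa using h2
    have hl2 : Tendsto (fun k => u (φ k) t i) atTop (nhds (v t i)) := (tendsto_pi_nhds.1 hl) i
    apply ge_of_tendsto hl2
    obtain ⟨n, hn⟩ := exists_nat_ge (-t)
    filter_upwards [eventually_ge_atTop n] with k hk
    apply hup
    have : (n : ℝ) ≤ φ k := by exact_mod_cast hk.trans (hφ.id_le k)
    linarith
  · intro t ht
    have := gron hC hv t (hvc t) 0
    rw [ht, hv0] at this
    simp at this hx
    rw [this] at hx
    simp at hx

lemma main {N : ℕ} (hN : 2 ≤ N) {B : ℝ → Matrix (Fin N) (Fin N) ℝ}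
    (hB : ∀ i j a b, IntervalIntegrable (fun t => B t i j) volume a b)
    (hB0 : ∀ t i j, i ≠ j → 0 ≤ B t i j) :
    ∃ v : ℝ → Fin N → ℝ, Continuous v ∧ (∀ t : ℝ, (∀ i, 0 ≤ v t i) ∧ v t ≠ 0) ∧
      ∀ s t : ℝ, s ≤ t → v t = v s + ∫ y in s..t, (B y).mulVec (v y) := by
  have hd := ms_int hB
  let C : ℝ → Matrix (Fin N) (Fin N) ℝ := fun t => B t + ms B t • (1 : Matrix _ _ ℝ)
  have hC : ∀ i j a b, IntervalIntegrable (fun t => C t i j) volume a b := by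
    intro i j a b
    simp only [C, Matrix.add_apply, Matrix.smul_apply, smul_eq_mul]
    exact (hB i j a b).add ((hd a b).mul_const _)
  have hC0 : ∀ t i j, 0 ≤ C t i j := by
    intro t i j
    simp only [C, Matrix.add_apply, Matrix.smul_apply, smul_eq_mul]
    by_cases h : i = j
    · subst h
      rw [Matrix.one_apply_eq, mul_one]
      have h1 : |B t i i| ≤ ms B t :=
        (Finset.single_le_sum (f := fun j => |B t i j|) (fun j _ => abs_nonneg _)
          (Finset.mem_univ i)).trans
        (Finset.single_le_sum (f := fun i => ∑ j, |B t i j|)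
          (fun i _ => by positivity) (Finset.mem_univ i))
      have := neg_abs_le (B t i i)
      linarith
    · rw [Matrix.one_apply_ne h, mul_zero, add_zero]
      exact hB0 t i j h
  obtain ⟨u, hu, hup, hun, hus⟩ := entire hN hC hC0
  let E : ℝ → ℝ := fun t => Real.exp ((-1) * ∫ y in (0:ℝ)..t, ms B y)
  have hE : Continuous E := by
    have := intervalIntegral.continuous_primitive hd 0
    fun_prop
  have hEp : ∀ t, 0 < E t := fun t => Real.exp_pos _
  have hvc : Continuous fun t => E t • u t := hE.smul hu
  refine ⟨fun t => E t • u t, hvc, fun t => ⟨fun i => mul_nonneg (hEp t).le (hup t i),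
    smul_ne_zero (hEp t).ne' (hun t)⟩, ?_⟩
  intro s t _
  ext i
  rw [Pi.add_apply, pi_eval (mv_int hB hvc s t)]
  have hmi : ∀ a b, IntervalIntegrable (fun y => (C y *ᵥ u y) i) volume a b := fun a b =>
    intervalIntegrable_iff.2 ((intervalIntegrable_iff.1 (mv_int hC hu a b)).eval i)
  have hueq : (fun y => u y i) = fun y => u s i + ∫ z in s..y, (C z *ᵥ u z) i := by
    ext y
    rw [hus s y, Pi.add_apply, pi_eval (mv_int hC hu s y)]
  have key := ftc_ac (f := fun y => E y * u y i) (f' := fun y => (B y *ᵥ (E y • u y)) i)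
    (a := s) (b := t) ?_ ?_
  · rw [key]
    simp
  · apply AbsolutelyContinuousOnInterval.fun_mul
    · exact ac_exp ((ac_prim hd 0 s t).const_mul _)
    · exact ac_lip (K := 1) (ac_prim hmi s s t) fun y _ z _ => by
        rw [congrFun hueq y, congrFun hueq z]; simp
  · filter_upwards [deriv_prim hd 0 s t, deriv_prim hmi s s t] with y h1 h2 hy
    have e1 : HasDerivAt E (E y * (-1 * ms B y)) y := ((h1 hy).const_mul (-1)).exp
    have e2 : HasDerivAt (fun y => u y i) ((C y *ᵥ u y) i) y := by
      rw [hueq]; exact (h2 hy).const_add _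
    convert! e1.mul e2 using 1
    simp only [C, add_mulVec, smul_mulVec, one_mulVec, mulVec_smul, Pi.add_apply, Pi.smul_apply,
      smul_eq_mul]
    ring

lemma abs_le_enorm {N : ℕ} (u : Fin N → ℝ) (i : Fin N) : |u i| ≤ enorm' u := by
  unfold enorm'
  apply Real.abs_le_sqrt
  exact Finset.single_le_sum (f := fun i => u i ^ 2) (fun i _ => sq_nonneg _) (Finset.mem_univ i)

lemma entry_le {N : ℕ} (M : Matrix (Fin N) (Fin N) ℝ) (i j : Fin N) : |M i j| ≤ eopNorm M := by
  have hb : BddAbove {c : ℝ | ∃ u : Fin N → ℝ, enorm' u ≤ 1 ∧ c = enorm' (M.mulVec u)} := by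
    refine ⟨Real.sqrt (∑ i, (∑ j, |M i j|) ^ 2), ?_⟩
    rintro c ⟨u, hu, rfl⟩
    apply Real.sqrt_le_sqrt
    refine Finset.sum_le_sum fun i _ => ?_
    rw [sq_le_sq, abs_of_nonneg (a := ∑ j, |M i j|) (by positivity)]
    simp only [mulVec, dotProduct]
    refine (Finset.abs_sum_le_sum_abs _ _).trans (Finset.sum_le_sum fun j _ => ?_)
    rw [abs_mul]
    exact mul_le_of_le_one_right (abs_nonneg _) ((abs_le_enorm u j).trans hu)
  have h1 : enorm' (M.mulVec (Pi.single j 1)) ≤ eopNorm M := by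
    apply le_csSup hb
    refine ⟨Pi.single j 1, ?_, rfl⟩
    simp [enorm', Pi.single_apply]
  refine le_trans ?_ h1
  have := abs_le_enorm (M.mulVec (Pi.single j 1)) i
  simpa using this

end Stmt15

/-- Existence of a nontrivial entire positive solution of a random
cooperative linear system of ODEs. -/
theorem stmt_15 {N : ℕ} (hN : 2 ≤ N)
    {Ω : Type*} [MeasurableSpace Ω] (ℙ : Measure Ω) [IsProbabilityMeasure ℙ]
    [ℙ.IsComplete]
    (θ : ℝ → Ω → Ω) (hθ0 : θ 0 = id)
    (hθadd : ∀ s t : ℝ, θ (s + t) = θ s ∘ θ t)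
    (hθjm : Measurable fun p : ℝ × Ω => θ p.1 p.2)
    (hθmp : ∀ t, MeasurePreserving (θ t) ℙ ℙ)
    (hθerg : ∀ F : Set Ω, MeasurableSet F → (∀ t, θ t ⁻¹' F = F) →
      ℙ F = 0 ∨ ℙ F = 1)
    (A : Ω → Matrix (Fin N) (Fin N) ℝ)
    (hAmeas : ∀ i j, Measurable fun ω => A ω i j)
    (hAloc : ∀ ω, ∀ a c : ℝ,
      IntervalIntegrable (fun t => eopNorm (A (θ t ω))) volume a c)
    (hO1 : ∀ ω (i j : Fin N), i ≠ j → 0 ≤ A ω i j) :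
    ∀ ω : Ω, ∃ v : ℝ → Fin N → ℝ, Continuous v ∧
      (∀ t : ℝ, (∀ i, 0 ≤ v t i) ∧ v t ≠ 0) ∧
      (∀ s t : ℝ, s ≤ t → v t = v s + ∫ τ in s..t, (A (θ τ ω)).mulVec (v τ)) := by
  intro ω
  have hθω : Measurable fun t : ℝ => θ t ω :=
    hθjm.comp (measurable_id.prodMk measurable_const)
  refine Stmt15.main hN (B := fun t => A (θ t ω)) ?_ fun t i j h => hO1 _ i j h
  intro i j a b
  refine (hAloc ω a b).mono_fun ((hAmeas i j).comp hθω).aestronglyMeasurable ?_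
  refine Eventually.of_forall fun t => ?_
  have h := Stmt15.entry_le (A (θ t ω)) i j
  beta_reduce
  rw [Real.norm_eq_abs, Real.norm_eq_abs]
  exact h.trans (le_abs_self _)
end
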